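/- arXiv:2105.09534 — 3 statements merged into one kernel-verified Lean document; each statement's English description precedes it below -/
import Mathlib

section
/- Let S be a finite set of convex subsets of ℝ with |S| = n ≥ 1. Then the set CL(S) = {⋂ T : ∅ ≠ T ⊆ S} of intersections of nonempty subfamilies of S has cardinality at most n². -/
/-!
The upper closures of the members of a nonempty finite family `T` of order-connected sets form a
chain, because the order is linear, and so do their lower closures. Hence some `I ∈ T` has the
smallest upper closure and some `J ∈ T` the smallest lower closure. An order-connected set is the
intersection of its upper and its lower closure, so `I ∩ J` is contained in every member of `T`
and `⋂₀ T = I ∩ J`. Thus every intersection is determined by a pair of members of the family.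
-/

open scoped FinsetFamily

theorem inter_subset_of_upperClosure_le_of_lowerClosure_le {α : Type*} [Preorder α]
    {I J K : Set α} (hK : K.OrdConnected) (hI : upperClosure K ≤ upperClosure I)
    (hJ : lowerClosure J ≤ lowerClosure K) : I ∩ J ⊆ K :=
  calc
    I ∩ J ⊆ ↑(upperClosure I) ∩ ↑(lowerClosure J) :=
      Set.inter_subset_inter subset_upperClosure subset_lowerClosure
    _ ⊆ ↑(upperClosure K) ∩ ↑(lowerClosure K) := Set.inter_subset_inter hI hJ
    _ = K := hK.upperClosure_inter_lowerClosure

section LinearOrder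

variable {α : Type*} [LinearOrder α]

theorem exists_sInter_eq_inter_of_ordConnected {T : Set (Set α)} (hfin : T.Finite)
    (hne : T.Nonempty) (hconn : ∀ K ∈ T, K.OrdConnected) :
    ∃ I ∈ T, ∃ J ∈ T, ⋂₀ T = I ∩ J := by
  -- Upper sets are ordered by reverse inclusion: the largest is the smallest as a set.
  obtain ⟨I, hI, hImax⟩ := T.exists_max_image upperClosure hfin hne
  obtain ⟨J, hJ, hJmin⟩ := T.exists_min_image lowerClosure hfin hne
  refine ⟨I, hI, J, hJ, Set.Subset.antisymm ?_ ?_⟩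
  · exact Set.subset_inter (Set.sInter_subset_of_mem hI) (Set.sInter_subset_of_mem hJ)
  · exact Set.subset_sInter fun K hK ↦
      inter_subset_of_upperClosure_le_of_lowerClosure_le (hconn K hK) (hImax K hK) (hJmin K hK)

theorem closure_card_le_sq_general (S : Finset (Set α)) (hconn : ∀ I ∈ S, I.OrdConnected) :
    {A : Set α | ∃ T : Finset (Set α), T ⊆ S ∧ T.Nonempty ∧ A = ⋂₀ ↑T}.ncard
      ≤ S.card ^ 2 := by
  classical
  have closure_subset_infs :
      {A : Set α | ∃ T : Finset (Set α), T ⊆ S ∧ T.Nonempty ∧ A = ⋂₀ ↑T} ⊆ ↑(S ⊼ S) := by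
    rintro _ ⟨T, hTS, hT, rfl⟩
    obtain ⟨I, hI, J, hJ, hIJ⟩ := exists_sInter_eq_inter_of_ordConnected T.finite_toSet hT
      fun K hK ↦ hconn K (hTS hK)
    exact hIJ ▸ Finset.inf_mem_infs (hTS hI) (hTS hJ)
  calc
    _ ≤ (↑(S ⊼ S) : Set (Set α)).ncard :=
      Set.ncard_le_ncard closure_subset_infs (Finset.finite_toSet _)
    _ = (S ⊼ S).card := Set.ncard_coe_finset _
    _ ≤ S.card * S.card := Finset.card_infs_le S S
    _ = S.card ^ 2 := (sq _).symm

end LinearOrder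

/-- For a finite set `S` of intervals (convex subsets) of `ℝ` with `|S| = n ≥ 1`, the
intersection-closure `CL(S) = {⋂ T : ∅ ≠ T ⊆ S}` has at most `n²` elements. -/
theorem closure_card_le_sq (S : Finset (Set ℝ)) (hS : S.Nonempty)
    (hconv : ∀ I ∈ S, Convex ℝ I) :
    {A : Set ℝ | ∃ T : Finset (Set ℝ), T ⊆ S ∧ T.Nonempty ∧ A = ⋂₀ ↑T}.ncard
      ≤ S.card ^ 2 :=
  closure_card_le_sq_general S fun I hI ↦ (hconv I hI).ordConnected
end

section
/- Let S be a finite set of nonempty intervals of ℝ with endpoints in ℤ ∪ {−∞, ∞} that is non-adjacent, i.e. for all (not necessarily distinct) I₁, I₂ ∈ S, sup(I₁) = inf(I₂) (as extended reals) implies sup(I₁) = 0. Then the set of all nonempty intersections {⋂ T : ∅ ≠ T ⊆ S, ⋂ T ≠ ∅} is also non-adjacent: for any two such nonempty intersections J₁, J₂, sup(J₁) = inf(J₂) implies sup(J₁) = 0. -/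
/-- Supremum of a set of reals, taken in the extended reals. -/
noncomputable def eSup (I : Set ℝ) : EReal := sSup (Real.toEReal '' I)

/-- Infimum of a set of reals, taken in the extended reals. -/
noncomputable def eInf (I : Set ℝ) : EReal := sInf (Real.toEReal '' I)

/-!
Fix a point `x` of a finite intersection of intervals. The parts of the intervals above `x` are
initial segments of `[x, ∞)`, hence form a chain under inclusion; its smallest member lies in the
intersection. So the intersection has the same supremum as one of the intervals and, dually, the
same infimum as another one: intersecting creates no new endpoints.
-/

section Nonadjacent

open Set

/-- Non-adjacency of a family of subsets of `α`, with endpoints taken in `β` along `e : α → β` and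
with `Z` the set of endpoints at which two members may touch. The notion for intervals of `ℝ` is
the case `e = Real.toEReal`, `Z = {0}`. -/
def IsNonadjacent {α β : Type*} [CompleteLattice β] (e : α → β) (Z : Set β)
    (S : Set (Set α)) : Prop :=
  ∀ I₁ ∈ S, ∀ I₂ ∈ S, sSup (e '' I₁) = sInf (e '' I₂) → sSup (e '' I₁) ∈ Z

/-- The closure `CL(S)` of a family of sets under intersection, keeping only the nonempty
intersections of nonempty subfamilies. -/
def interClosure {α : Type*} (S : Set (Set α)) : Set (Set α) :=
  {J | ∃ T : Set (Set α), T ⊆ S ∧ T.Nonempty ∧ J = ⋂₀ T ∧ J.Nonempty}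

variable {α β : Type*} [LinearOrder α] [CompleteLattice β]

theorem inter_Ici_subset_total {I J : Set α} (hI : I.OrdConnected) (hJ : J.OrdConnected) {x : α}
    (hxI : x ∈ I) (hxJ : x ∈ J) : I ∩ Ici x ⊆ J ∩ Ici x ∨ J ∩ Ici x ⊆ I ∩ Ici x := by
  rw [or_iff_not_imp_left, not_subset]
  rintro ⟨a, ⟨haI, hxa⟩, ha⟩ b ⟨hbJ, hxb⟩
  have haJ : a ∉ J := fun haJ => ha ⟨haJ, hxa⟩
  have hba : b ≤ a := le_of_not_ge fun hab => haJ (hJ.out hxJ hbJ ⟨hxa, hab⟩)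
  exact ⟨hI.out hxI haI ⟨hxb, hba⟩, hxb⟩

theorem exists_mem_inter_Ici_subset_sInter {T : Set (Set α)} (hfin : T.Finite) (hT : T.Nonempty)
    (hord : ∀ I ∈ T, I.OrdConnected) {x : α} (hx : x ∈ ⋂₀ T) :
    ∃ I ∈ T, I ∩ Ici x ⊆ ⋂₀ T := by
  obtain ⟨I, hI, hmin⟩ := hfin.exists_minimalFor (fun I => I ∩ Ici x) T hT
  refine ⟨I, hI, subset_sInter fun K hK => ?_⟩
  have hIK : I ∩ Ici x ⊆ K ∩ Ici x :=
    (inter_Ici_subset_total (hord I hI) (hord K hK) (hx I hI) (hx K hK)).elim id (hmin hK)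
  exact hIK.trans inter_subset_left

theorem exists_sSup_image_sInter_eq {e : α → β} (he : Monotone e) {T : Set (Set α)}
    (hfin : T.Finite) (hT : T.Nonempty) (hord : ∀ I ∈ T, I.OrdConnected)
    (hne : (⋂₀ T).Nonempty) : ∃ I ∈ T, sSup (e '' ⋂₀ T) = sSup (e '' I) := by
  obtain ⟨x, hx⟩ := hne
  obtain ⟨I, hI, hsub⟩ := exists_mem_inter_Ici_subset_sInter hfin hT hord hx
  refine ⟨I, hI, le_antisymm (sSup_le_sSup (image_mono (sInter_subset_of_mem hI))) ?_⟩
  refine sSup_le (forall_mem_image.2 fun a ha => ?_)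
  have hmax : max a x ∈ I := max_rec' (· ∈ I) ha (hx I hI)
  calc
    e a ≤ e (max a x) := he (le_max_left a x)
    _ ≤ sSup (e '' ⋂₀ T) := le_sSup (mem_image_of_mem e (hsub ⟨hmax, le_max_right a x⟩))

theorem exists_sInf_image_sInter_eq {e : α → β} (he : Monotone e) {T : Set (Set α)}
    (hfin : T.Finite) (hT : T.Nonempty) (hord : ∀ I ∈ T, I.OrdConnected)
    (hne : (⋂₀ T).Nonempty) : ∃ I ∈ T, sInf (e '' ⋂₀ T) = sInf (e '' I) :=
  exists_sSup_image_sInter_eq (α := αᵒᵈ) (β := βᵒᵈ) he.dual hfin hT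
    (fun I hI => (hord I hI).dual) hne

theorem closure_nonadjacent_general {e : α → β} (he : Monotone e) {Z : Set β} {S : Set (Set α)}
    (hfin : S.Finite) (hord : ∀ I ∈ S, I.OrdConnected) (hna : IsNonadjacent e Z S) :
    IsNonadjacent e Z (interClosure S) := by
  rintro _ ⟨T₁, hT₁S, hT₁, rfl, hne₁⟩ _ ⟨T₂, hT₂S, hT₂, rfl, hne₂⟩ hadj
  obtain ⟨I₁, hI₁, hsup⟩ := exists_sSup_image_sInter_eq he (hfin.subset hT₁S) hT₁
    (fun I hI => hord I (hT₁S hI)) hne₁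
  obtain ⟨I₂, hI₂, hinf⟩ := exists_sInf_image_sInter_eq he (hfin.subset hT₂S) hT₂
    (fun I hI => hord I (hT₂S hI)) hne₂
  rw [hsup, hinf] at hadj
  rw [hsup]
  exact hna I₁ (hT₁S hI₁) I₂ (hT₂S hI₂) hadj

end Nonadjacent

/-- If `S` is a finite, non-adjacent set of nonempty intervals of `ℝ` with endpoints
in `ℤ ∪ {−∞, ∞}`, then the set of nonempty intersections of nonempty subfamilies of
`S` is again non-adjacent: for any two such intersections `J₁, J₂`,
`sup J₁ = inf J₂` implies `sup J₁ = 0`. -/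
theorem closure_nonadjacent (S : Set (Set ℝ)) (hfin : S.Finite)
    (hne : ∀ I ∈ S, I.Nonempty) (hconv : ∀ I ∈ S, Convex ℝ I)
    (hsup : ∀ I ∈ S, (∃ n : ℤ, eSup I = ((n : ℝ) : EReal)) ∨ eSup I = ⊤)
    (hinf : ∀ I ∈ S, (∃ n : ℤ, eInf I = ((n : ℝ) : EReal)) ∨ eInf I = ⊥)
    (hna : ∀ I₁ ∈ S, ∀ I₂ ∈ S, eSup I₁ = eInf I₂ → eSup I₁ = 0) :
    ∀ J₁ ∈ {J : Set ℝ | ∃ T : Set (Set ℝ), T ⊆ S ∧ T.Nonempty ∧ J = ⋂₀ T ∧ J.Nonempty},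
    ∀ J₂ ∈ {J : Set ℝ | ∃ T : Set (Set ℝ), T ⊆ S ∧ T.Nonempty ∧ J = ⋂₀ T ∧ J.Nonempty},
      eSup J₁ = eInf J₂ → eSup J₁ = 0 := by
  exact closure_nonadjacent_general (Z := {0}) EReal.coe_strictMono.monotone hfin
    (fun I hI => (hconv I hI).ordConnected) hna
end

section
/- Let γ be a 1-TPTL formula over Σ in negation normal form containing no freeze quantifier, with clock constraints over intervals from I_ν. For every I_ν-interval word κ over Σ and every position j of κ: if κ,j ⊨ LTL(γ), then for every pointed timed word (ρ,i) consistent with κ, ρ,j,τ_i ⊨ γ (i.e. γ holds at position j of ρ under the valuation that freezes x to τ_i). -/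
/-- A timed word over `σ`. -/
structure TWord (σ : Type) where
  len : ℕ
  pos : 0 < len
  label : ℕ → Set σ
  time : ℕ → ℝ
  label_ne : ∀ j < len, (label j).Nonempty
  time_zero : time 0 = 0
  time_mono : ∀ j k : ℕ, j ≤ k → k < len → time j ≤ time k

/-- 1-TPTL formulas in negation normal form over propositions `σ`, with a single
clock `x`: freeze quantification `x.φ` and clock constraints `T − x ∈ I`. -/
inductive TPTL (σ : Type) : Type where
  | atom (a : σ)
  | natom (a : σ)
  | tt
  | ff
  | freeze (φ : TPTL σ)
  | constraintT (I : Set ℝ)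
  | and (φ ψ : TPTL σ)
  | or (φ ψ : TPTL σ)
  | untl (φ ψ : TPTL σ)
  | snce (φ ψ : TPTL σ)
  | alw (φ : TPTL σ)
  | hist (φ : TPTL σ)

/-- `φ` contains no freeze quantifier. -/
def TPTL.FreezeFree {σ : Type} : TPTL σ → Prop
  | .freeze _ => False
  | .and φ ψ => φ.FreezeFree ∧ ψ.FreezeFree
  | .or φ ψ => φ.FreezeFree ∧ ψ.FreezeFree
  | .untl φ ψ => φ.FreezeFree ∧ ψ.FreezeFree
  | .snce φ ψ => φ.FreezeFree ∧ ψ.FreezeFree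
  | .alw φ => φ.FreezeFree
  | .hist φ => φ.FreezeFree
  | _ => True

/-- The set of intervals appearing in clock constraints of `φ`. -/
def TPTL.ivals {σ : Type} : TPTL σ → Set (Set ℝ)
  | .constraintT I => {I}
  | .freeze φ => φ.ivals
  | .and φ ψ => φ.ivals ∪ ψ.ivals
  | .or φ ψ => φ.ivals ∪ ψ.ivals
  | .untl φ ψ => φ.ivals ∪ ψ.ivals
  | .snce φ ψ => φ.ivals ∪ ψ.ivals
  | .alw φ => φ.ivals
  | .hist φ => φ.ivals
  | _ => ∅

/-- TPTL satisfaction `ρ, i, v ⊨ φ` (strict U/S, valuation `v` of the clock `x`). -/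
def tsat {σ : Type} (ρ : TWord σ) : TPTL σ → ℕ → ℝ → Prop
  | .atom a, i, _ => a ∈ ρ.label i
  | .natom a, i, _ => a ∉ ρ.label i
  | .tt, _, _ => True
  | .ff, _, _ => False
  | .freeze φ, i, _ => tsat ρ φ i (ρ.time i)
  | .constraintT I, i, v => ρ.time i - v ∈ I
  | .and φ ψ, i, v => tsat ρ φ i v ∧ tsat ρ ψ i v
  | .or φ ψ, i, v => tsat ρ φ i v ∨ tsat ρ ψ i v
  | .untl φ ψ, i, v =>
      ∃ j, i < j ∧ j < ρ.len ∧ tsat ρ ψ j v ∧ ∀ k, i < k → k < j → tsat ρ φ k v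
  | .snce φ ψ, i, v =>
      ∃ j, j < i ∧ tsat ρ ψ j v ∧ ∀ k, j < k → k < i → tsat ρ φ k v
  | .alw φ, i, v => ∀ j, i < j → j < ρ.len → tsat ρ φ j v
  | .hist φ, i, v => ∀ j, j < i → tsat ρ φ j v

/-- Atomic propositions of interval words: a proposition from `σ`, an interval, or
the anchor marker `anch`. -/
abbrev TAtom (σ : Type) : Type := σ ⊕ (Set ℝ ⊕ Unit)

def prAt {σ : Type} (a : σ) : TAtom σ := Sum.inl a
def ivAt {σ : Type} (I : Set ℝ) : TAtom σ := Sum.inr (Sum.inl I)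
def anchAt {σ : Type} : TAtom σ := Sum.inr (Sum.inr ())

/-- A finite nonempty word over the alphabet `2^P`. -/
structure PWord (P : Type) where
  len : ℕ
  pos : 0 < len
  label : ℕ → Set P

/-- LTL formulas over atomic propositions `P`, with strict until and since. -/
inductive LTL (P : Type) : Type where
  | atom (p : P)
  | tt
  | neg (φ : LTL P)
  | and (φ ψ : LTL P)
  | or (φ ψ : LTL P)
  | untl (φ ψ : LTL P)
  | snce (φ ψ : LTL P)

/-- LTL satisfaction `w, j ⊨ φ` on finite words. -/
def lsat {P : Type} (w : PWord P) : LTL P → ℕ → Prop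
  | .atom p, j => p ∈ w.label j
  | .tt, _ => True
  | .neg φ, j => ¬ lsat w φ j
  | .and φ ψ, j => lsat w φ j ∧ lsat w ψ j
  | .or φ ψ, j => lsat w φ j ∨ lsat w ψ j
  | .untl φ ψ, j =>
      ∃ k, j < k ∧ k < w.len ∧ lsat w ψ k ∧ ∀ m, j < m → m < k → lsat w φ m
  | .snce φ ψ, j =>
      ∃ k, k < j ∧ lsat w ψ k ∧ ∀ m, k < m → m < j → lsat w φ m

/-- Strict eventually. -/
def LTL.F {P : Type} (φ : LTL P) : LTL P := .untl .tt φ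
/-- Strict once (past). -/
def LTL.Pst {P : Type} (φ : LTL P) : LTL P := .snce .tt φ
/-- Weak (non-strict) eventually. -/
def LTL.Fw {P : Type} (φ : LTL P) : LTL P := .or φ φ.F
/-- Strict globally. -/
def LTL.G {P : Type} (φ : LTL P) : LTL P := .neg φ.neg.F
/-- Weak (non-strict) globally. -/
def LTL.Gw {P : Type} (φ : LTL P) : LTL P := .neg φ.neg.Fw
/-- Strict historically. -/
def LTL.H {P : Type} (φ : LTL P) : LTL P := .neg φ.neg.Pst

/-- `LTL(φ)`: the LTL formula obtained from a (freeze-free) TPTL formula by replacing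
each clock constraint `T − x ∈ I` by the atomic proposition `I`. -/
def toLTL {σ : Type} : TPTL σ → LTL (TAtom σ)
  | .atom a => .atom (prAt a)
  | .natom a => .neg (.atom (prAt a))
  | .tt => .tt
  | .ff => .neg .tt
  | .freeze _ => .tt
  | .constraintT I => .atom (ivAt I)
  | .and φ ψ => .and (toLTL φ) (toLTL ψ)
  | .or φ ψ => .or (toLTL φ) (toLTL ψ)
  | .untl φ ψ => .untl (toLTL φ) (toLTL ψ)
  | .snce φ ψ => .snce (toLTL φ) (toLTL ψ)
  | .alw φ => (toLTL φ).G
  | .hist φ => (toLTL φ).H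

/-- `w` is an `Iν`-interval word: it has a unique anchor position, the anchor's label
contains no interval, and all intervals in labels come from `Iν`. -/
def IsIW {σ : Type} (Iν : Set (Set ℝ)) (w : PWord (TAtom σ)) : Prop :=
  (∃ i, i < w.len ∧ anchAt ∈ w.label i ∧ ∀ j < w.len, anchAt ∈ w.label j → j = i) ∧
  (∀ j < w.len, anchAt ∈ w.label j → ∀ I : Set ℝ, ivAt I ∉ w.label j) ∧
  (∀ j < w.len, ∀ I : Set ℝ, ivAt I ∈ w.label j → I ∈ Iν)

/-- The pointed timed word `(ρ, i)` is consistent with the interval word `w`: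
same length, `i` is the (unique) anchor of `w`, same propositions at every position,
and every interval at a position `j ≠ i` contains `τ_j − τ_i`. -/
def ConsistentW {σ : Type} (ρ : TWord σ) (i : ℕ) (w : PWord (TAtom σ)) : Prop :=
  ρ.len = w.len ∧ i < w.len ∧ anchAt ∈ w.label i ∧
  (∀ j < w.len, anchAt ∈ w.label j → j = i) ∧
  (∀ j < w.len, ρ.label j = {a | prAt a ∈ w.label j}) ∧
  (∀ j < w.len, j ≠ i → ∀ I : Set ℝ, ivAt I ∈ w.label j → ρ.time j - ρ.time i ∈ I)

section LTL

variable {P : Type} {w : PWord P} {φ : LTL P} {j : ℕ}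

theorem lsat_F : lsat w φ.F j ↔ ∃ k, j < k ∧ k < w.len ∧ lsat w φ k := by
  simp [LTL.F, lsat]

theorem lsat_Pst : lsat w φ.Pst j ↔ ∃ k, k < j ∧ lsat w φ k := by
  simp [LTL.Pst, lsat]

theorem lsat_G : lsat w φ.G j ↔ ∀ k, j < k → k < w.len → lsat w φ k := by
  simp [LTL.G, lsat, lsat_F]

theorem lsat_H : lsat w φ.H j ↔ ∀ k, k < j → lsat w φ k := by
  simp [LTL.H, lsat, lsat_Pst]

end LTL

/-- `ρ` realizes `w` at the clock value `v`: the two words have the same length and propositions,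
and the intervals in `w` are clock constraints that hold in `ρ` under the valuation `v`. This is
consistency with the anchor's time stamp replaced by an arbitrary `v` and no position exempt from
the interval condition. -/
structure TWord.Realizes {σ : Type} (ρ : TWord σ) (v : ℝ) (w : PWord (TAtom σ)) : Prop where
  len_eq : ρ.len = w.len
  mem_label_iff : ∀ {j}, j < w.len → ∀ {a}, a ∈ ρ.label j ↔ prAt a ∈ w.label j
  time_sub_mem : ∀ {j}, j < w.len → ∀ {I}, ivAt I ∈ w.label j → ρ.time j - v ∈ I

theorem ConsistentW.realizes {σ : Type} {Iν : Set (Set ℝ)} {ρ : TWord σ} {i : ℕ}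
    {w : PWord (TAtom σ)} (hρ : ConsistentW ρ i w) (hw : IsIW Iν w) :
    ρ.Realizes (ρ.time i) w := by
  obtain ⟨len_eq, -, anch_mem, -, label_eq, time_mem⟩ := hρ
  obtain ⟨-, anch_no_interval, -⟩ := hw
  refine ⟨len_eq, fun hj _ => by simp [label_eq _ hj], fun {j} hj I hI => ?_⟩
  have hji : j ≠ i := by
    rintro rfl
    exact anch_no_interval j hj anch_mem I hI
  exact time_mem j hj hji I hI

-- Interval atoms occur only positively in `toLTL γ`, so truth transfers to `ρ` even though `w` may
-- omit intervals whose constraints hold in `ρ`.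
theorem ltl_sat_implies_tptl_general {σ : Type} {ρ : TWord σ} {v : ℝ} {w : PWord (TAtom σ)}
    (h : ρ.Realizes v w) {γ : TPTL σ} (hff : γ.FreezeFree) {j : ℕ} (hj : j < w.len)
    (hsat : lsat w (toLTL γ) j) : tsat ρ γ j v := by
  induction γ generalizing j with
  | atom a => exact (h.mem_label_iff hj).2 hsat
  | natom a => exact mt (h.mem_label_iff hj).1 hsat
  | tt => trivial
  | ff => exact hsat trivial
  | freeze φ => exact hff.elim
  | constraintT I => exact h.time_sub_mem hj hsat
  | and φ ψ ihφ ihψ => exact hsat.imp (ihφ hff.1 hj) (ihψ hff.2 hj)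
  | or φ ψ ihφ ihψ => exact hsat.imp (ihφ hff.1 hj) (ihψ hff.2 hj)
  | untl φ ψ ihφ ihψ =>
    obtain ⟨k, hjk, hk, hψ, hφ⟩ := hsat
    exact ⟨k, hjk, hk.trans_eq h.len_eq.symm, ihψ hff.2 hk hψ,
      fun m hjm hmk => ihφ hff.1 (hmk.trans hk) (hφ m hjm hmk)⟩
  | snce φ ψ ihφ ihψ =>
    obtain ⟨k, hkj, hψ, hφ⟩ := hsat
    exact ⟨k, hkj, ihψ hff.2 (hkj.trans hj) hψ,
      fun m hkm hmj => ihφ hff.1 (hmj.trans hj) (hφ m hkm hmj)⟩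
  | alw φ ih =>
    intro k hjk hkρ
    have hk : k < w.len := hkρ.trans_eq h.len_eq
    exact ih hff hk (lsat_G.1 hsat k hjk hk)
  | hist φ ih => exact fun k hkj => ih hff (hkj.trans hj) (lsat_H.1 hsat k hkj)

/-- Lemma 9(i) of the paper: if `κ, j ⊨ LTL(γ)` for a freeze-free
1-TPTL formula `γ`, then for every pointed timed word `(ρ, i)` consistent with `κ`,
`γ` holds at position `j` of `ρ` under the valuation freezing `x` to `τ_i`. -/
theorem ltl_sat_implies_tptl {σ : Type} (Iν : Set (Set ℝ))
    (γ : TPTL σ) (hff : γ.FreezeFree) (hiv : γ.ivals ⊆ Iν)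
    (κ : PWord (TAtom σ)) (hκ : IsIW Iν κ) (j : ℕ) (hj : j < κ.len)
    (hsat : lsat κ (toLTL γ) j) :
    ∀ (ρ : TWord σ) (i : ℕ), ConsistentW ρ i κ → tsat ρ γ j (ρ.time i) := by
  intro ρ i hρ
  exact ltl_sat_implies_tptl_general (hρ.realizes hκ) hff hj hsat
end
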